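/- arXiv:2208.05291 — 5 statements merged into one kernel-verified Lean document; each statement's English description precedes it below -/
import Mathlib

section
/- Let A be a 2n×2n real symmetric positive-semidefinite matrix whose kernel is a symplectic subspace of ℝ^{2n} of dimension 2m with 0 ≤ m < n. Then there exists a symplectic matrix S ∈ ℝ^{2n×2n} (i.e., Sᵀ J_{2n} S = J_{2n}) and real numbers 0 = d_1 = ⋯ = d_m < d_{m+1} ≤ ⋯ ≤ d_n such that Sᵀ A S = [[D, 0], [0, D]] where D = diag(d_1, …, d_n). -/
/-!
The statement is the coordinate form of a fact about a finite-dimensional real vector space `V` with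
a nondegenerate alternating form `ω` and a positive-semidefinite symmetric form `Q` whose radical is
`ω`-symplectic: `V` has a symplectic basis that is also `Q`-orthogonal, with `Q` taking the same
value `dᵢ ≥ 0` on both members of each pair (`exists_williamson_basis`).

The basis is built by splitting off one pair at a time (`exists_williamson_pair`). If the radical of
`Q` is nonzero, any pair `x, y` in it with `ω x y = 1` will do. Otherwise `Q` is an inner product;
write `Q u v = ω (T u) v`. Then `T` is `Q`-skew, so `T²` is `Q`-symmetric and has an eigenvector `u`,
whose eigenvalue is `-d²` with `d > 0`; rescaled, `u` and `-T u / d` form the pair. In both cases the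
`ω`-complement of the pair is `Q`-orthogonal to it, so all hypotheses pass to the complement and
induction on the dimension applies.

Sorting the `dᵢ` makes them monotone, and comparing the rank of `A` with that of the congruent
diagonal matrix shows that exactly `m` of them vanish.
-/

open Matrix

/-- The standard symplectic matrix `J_{2n}`. -/
noncomputable def symplJ (n : ℕ) : Matrix (Fin n ⊕ Fin n) (Fin n ⊕ Fin n) ℝ :=
  Matrix.fromBlocks 0 1 (-1) 0

/-- A subspace `W ⊆ ℝ^{2n}` is symplectic. -/
def IsSymplecticSubspace {n : ℕ} (W : Submodule ℝ (Fin n ⊕ Fin n → ℝ)) : Prop :=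
  ∀ x ∈ W, x ≠ 0 → ∃ y ∈ W, x ⬝ᵥ (symplJ n).mulVec y = 1

/-- The spectral theorem for an operator that is symmetric with respect to a positive-definite
bilinear form, in the form of the existence of one eigenvector. -/
lemma exists_eigenvector_of_posDef_symm {V : Type} [AddCommGroup V] [Module ℝ V]
    [FiniteDimensional ℝ V] [Nontrivial V] (Q : V →ₗ[ℝ] V →ₗ[ℝ] ℝ)
    (hs : ∀ x y, Q x y = Q y x) (hpos : ∀ x, x ≠ 0 → 0 < Q x x)
    (R : V →ₗ[ℝ] V) (hR : ∀ x y, Q (R x) y = Q x (R y)) :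
    ∃ (u : V) (l : ℝ), u ≠ 0 ∧ R u = l • u := by
  let core : InnerProductSpace.Core ℝ V :=
    { inner := fun x y => Q x y
      conj_inner_symm := fun x y => by simpa using hs y x
      re_inner_nonneg := fun x => by
        rcases eq_or_ne x 0 with rfl | h
        · simp
        · simpa using (hpos x h).le
      add_left := fun x y z => by simp
      smul_left := fun x y r => by simp
      definite := fun x hx => by
        by_contra h
        exact (hpos x h).ne' hx }
  let _ : NormedAddCommGroup V := core.toNormedAddCommGroup
  let _ : InnerProductSpace ℝ V := InnerProductSpace.ofCore core.toCore
  have hsym : LinearMap.IsSymmetric R := fun x y => hR x y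
  obtain ⟨u, hu⟩ := hsym.hasEigenvalue_iSup_of_finiteDimensional.exists_hasEigenvector
  exact ⟨u, _, hu.2, hu.apply_eq_smul⟩

/-- One symplectic pair `e, f` adapted to `Q`, whose `ω`-complement is `Q`-orthogonal to it. -/
lemma exists_williamson_pair {V : Type} [AddCommGroup V] [Module ℝ V]
    [FiniteDimensional ℝ V] [Nontrivial V] (ω Q : V →ₗ[ℝ] V →ₗ[ℝ] ℝ)
    (halt : ∀ x, ω x x = 0) (hnd : ∀ x, (∀ y, ω x y = 0) → x = 0)
    (hs : ∀ x y, Q x y = Q y x) (hpos : ∀ x, 0 ≤ Q x x)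
    (hker : ∀ x, (∀ w, Q x w = 0) → x ≠ 0 → ∃ y, (∀ w, Q y w = 0) ∧ ω x y = 1) :
    ∃ (e f : V) (d : ℝ), 0 ≤ d ∧ ω e f = 1 ∧ Q e e = d ∧ Q f f = d ∧ Q e f = 0 ∧
      ∀ w, ω e w = 0 → ω f w = 0 → Q e w = 0 ∧ Q f w = 0 := by
  have hskew : ∀ x y, ω x y = - ω y x := fun x y => by
    have h := halt (x + y)
    simp only [map_add, LinearMap.add_apply, halt] at h
    linarith
  by_cases hz : ∃ x, (∀ w, Q x w = 0) ∧ x ≠ 0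
  · obtain ⟨x, hx, hx0⟩ := hz
    obtain ⟨y, hy, hxy⟩ := hker x hx hx0
    exact ⟨x, y, 0, le_rfl, hxy, hx x, hy y, hx y, fun w _ _ => ⟨hx w, hy w⟩⟩
  · push Not at hz
    -- A semidefinite form with trivial radical is definite, by the discriminant argument
    -- applied to `Q (t x + w) (t x + w)`.
    have hpd : ∀ x, x ≠ 0 → 0 < Q x x := by
      intro x hx
      refine lt_of_le_of_ne (hpos x) fun h => hx (hz x fun w => ?_)
      by_contra hw
      have h1 := hpos ((-(Q w w + 1) / (2 * Q x w)) • x + w)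
      simp only [map_add, map_smul, LinearMap.add_apply, LinearMap.smul_apply, smul_eq_mul,
        ← h, hs w x] at h1
      have h2 : (-(Q w w + 1) / (2 * Q x w)) * Q x w = -(Q w w + 1) / 2 := by
        field_simp
      nlinarith
    have hinj : Function.Injective ω := by
      rw [← LinearMap.ker_eq_bot, LinearMap.ker_eq_bot']
      exact fun x hx => hnd x fun y => by rw [hx]; rfl
    let E : V ≃ₗ[ℝ] Module.Dual ℝ V :=
      LinearEquiv.ofInjectiveOfFinrankEq ω hinj Subspace.dual_finrank_eq.symm
    let T : V →ₗ[ℝ] V := E.symm.toLinearMap ∘ₗ Q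
    have hT : ∀ u v, ω (T u) v = Q u v := fun u v => by
      have : E (T u) = Q u := by simp [T]
      rw [← this]; rfl
    have hTω : ∀ u v, ω (T u) v = - ω u (T v) := fun u v => by
      rw [hT, hs, ← hT, hskew]
    have hTQ : ∀ u v, Q (T u) v = - Q u (T v) := fun u v => by
      rw [← hT, hTω, hT]
    obtain ⟨u, l, hu, hl⟩ := exists_eigenvector_of_posDef_symm Q hs hpd (T ∘ₗ T)
      (fun x y => by simp [hTQ])
    have hl' : T (T u) = l • u := hl
    have hTu : T u ≠ 0 := fun h => by
      have h1 := hT u u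
      rw [h] at h1
      simp only [map_zero, LinearMap.zero_apply] at h1
      exact (hpd u hu).ne h1
    have hq : l * Q u u = - Q (T u) (T u) := by
      have := hTQ u (T u)
      rw [hl', map_smul, smul_eq_mul] at this
      linarith
    have hqu := hpd u hu
    have hqT := hpd _ hTu
    have hlneg : l < 0 := by
      by_contra h
      push Not at h
      nlinarith [mul_nonneg h hqu.le]
    obtain ⟨d, hd, hdl⟩ : ∃ d : ℝ, 0 < d ∧ l = - (d * d) :=
      ⟨√(-l), Real.sqrt_pos.2 (by linarith), by
        rw [Real.mul_self_sqrt (by linarith)]; ring⟩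
    -- Rescaling so that `Q e e = d`.
    obtain ⟨c, hc⟩ : ∃ c : ℝ, c * c * Q u u = d :=
      ⟨√(d / Q u u), by
        rw [Real.mul_self_sqrt (by positivity)]
        field_simp⟩
    have hTe : T (T (c • u)) = (-(d * d)) • (c • u) := by
      rw [map_smul, map_smul, hl', hdl, smul_comm]
    have hQe : Q (c • u) (c • u) = d := by
      simp only [map_smul, LinearMap.smul_apply, smul_eq_mul]
      linarith
    generalize c • u = e at hTe hQe
    have h0 : Q e (T e) = 0 := by
      have := hTQ e e
      rw [hs] at this
      linarith
    have hTT : Q (T e) (T e) = d * d * d := by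
      rw [hTQ, hTe, map_smul, smul_eq_mul, hQe]; ring
    refine ⟨e, (-d⁻¹) • T e, d, hd.le, ?_, hQe, ?_, ?_, ?_⟩
    · have h1 := hTω e e
      rw [hT, hQe] at h1
      rw [map_smul, smul_eq_mul]
      field_simp
      linarith
    · simp only [map_smul, LinearMap.smul_apply, smul_eq_mul, hTT]
      field_simp
    · rw [map_smul, h0, smul_zero]
    · intro w h1 h2
      rw [map_smul, LinearMap.smul_apply, smul_eq_mul, hT] at h2
      have hd' : -d⁻¹ ≠ 0 := by simp [hd.ne']
      refine ⟨(mul_eq_zero.1 h2).resolve_left hd', ?_⟩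
      rw [map_smul, LinearMap.smul_apply, ← hT, hTe, map_smul, LinearMap.smul_apply, h1]
      simp

/-- The coordinate-free Williamson theorem, with the values `d i` unsorted. -/
lemma exists_williamson_basis (n : ℕ) : ∀ {V : Type} [AddCommGroup V] [Module ℝ V]
    [FiniteDimensional ℝ V] (ω Q : V →ₗ[ℝ] V →ₗ[ℝ] ℝ), Module.finrank ℝ V = 2 * n →
    (∀ x, ω x x = 0) → (∀ x, (∀ y, ω x y = 0) → x = 0) →
    (∀ x y, Q x y = Q y x) → (∀ x, 0 ≤ Q x x) →
    (∀ x, (∀ w, Q x w = 0) → x ≠ 0 → ∃ y, (∀ w, Q y w = 0) ∧ ω x y = 1) →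
    ∃ (e f : Fin n → V) (d : Fin n → ℝ), (∀ i, 0 ≤ d i) ∧
      (∀ i j, ω (e i) (e j) = 0) ∧ (∀ i j, ω (f i) (f j) = 0) ∧
      (∀ i j, ω (e i) (f j) = if i = j then 1 else 0) ∧
      (∀ i j, Q (e i) (e j) = if i = j then d i else 0) ∧
      (∀ i j, Q (f i) (f j) = if i = j then d i else 0) ∧
      (∀ i j, Q (e i) (f j) = 0) := by
  induction n with
  | zero =>
    intros
    exact ⟨Fin.elim0, Fin.elim0, Fin.elim0, fun i => i.elim0, fun i => i.elim0,
      fun i => i.elim0, fun i => i.elim0, fun i => i.elim0, fun i => i.elim0, fun i => i.elim0⟩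
  | succ n ih =>
    intro V _ _ _ ω Q hdim halt hnd hs hpos hker
    have : Nontrivial V := Module.nontrivial_of_finrank_pos (R := ℝ) (by omega)
    have hskew : ∀ x y, ω x y = - ω y x := fun x y => by
      have h := halt (x + y)
      simp only [map_add, LinearMap.add_apply, halt] at h
      linarith
    obtain ⟨e, f, d, hd, hef, hee, hff, hQef, horth⟩ :=
      exists_williamson_pair ω Q halt hnd hs hpos hker
    have hfe : ω f e = -1 := by rw [hskew, hef]
    let L : V →ₗ[ℝ] ℝ × ℝ := (ω e).prod (ω f)
    let W : Submodule ℝ V := LinearMap.ker L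
    have hW : ∀ w, w ∈ W ↔ ω e w = 0 ∧ ω f w = 0 := fun w => by
      simp [W, L, LinearMap.mem_ker]
    have hsurj : LinearMap.range L = ⊤ := by
      rw [LinearMap.range_eq_top]
      rintro ⟨a, b⟩
      refine ⟨a • f - b • e, ?_⟩
      simp [L, halt, hef, hfe]
    have hWdim : Module.finrank ℝ W = 2 * n := by
      have h := LinearMap.finrank_range_add_finrank_ker L
      rw [hsurj, finrank_top, Module.finrank_prod, Module.finrank_self, hdim] at h
      change 1 + 1 + Module.finrank ℝ W = _ at h
      omega
    -- The projection of `V` to `W` along the span of `e` and `f`.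
    let p : V → V := fun y => y - ω y f • e + ω y e • f
    have hp : ∀ y, p y ∈ W := fun y => by
      rw [hW]
      simp only [p, map_add, map_sub, map_smul, smul_eq_mul, halt, hef, hfe]
      constructor
      · rw [hskew y e]; ring
      · rw [hskew y f]; ring
    have hpω : ∀ x ∈ W, ∀ y, ω x (p y) = ω x y := fun x hx y => by
      obtain ⟨h1, h2⟩ := (hW x).1 hx
      simp [p, hskew x e, hskew x f, h1, h2]
    have hpQ : ∀ x ∈ W, ∀ y, Q x (p y) = Q x y := fun x hx y => by
      obtain ⟨h1, h2⟩ := (hW x).1 hx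
      obtain ⟨h3, h4⟩ := horth x h1 h2
      simp [p, hs x e, hs x f, h3, h4]
    obtain ⟨e', f', d', hd', hee', hff', hef', hQe', hQf', hQef'⟩ :=
      ih (V := W) (ω.domRestrict₁₂ W W) (Q.domRestrict₁₂ W W) hWdim
        (fun x => halt x)
        (fun x hx => Subtype.ext <| hnd x fun y => by
          rw [← hpω x x.2]; exact hx ⟨p y, hp y⟩)
        (fun x y => hs x y) (fun x => hpos x)
        (fun x hx hx0 => by
          obtain ⟨y, hy, hxy⟩ := hker x (fun w => by
            rw [← hpQ x x.2]; exact hx ⟨p w, hp w⟩) (fun h => hx0 (Subtype.ext h))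
          refine ⟨⟨p y, hp y⟩, fun w => ?_, ?_⟩
          · change Q (p y) w = 0
            rw [hs, hpQ w w.2, hs, hy]
          · change ω x (p y) = 1
            rw [hpω x x.2, hxy])
    have hWe : ∀ w : W, ω e w = 0 := fun w => ((hW w).1 w.2).1
    have hWf : ∀ w : W, ω f w = 0 := fun w => ((hW w).1 w.2).2
    have hWe' : ∀ w : W, ω w e = 0 := fun w => by rw [hskew, hWe, neg_zero]
    have hWf' : ∀ w : W, ω w f = 0 := fun w => by rw [hskew, hWf, neg_zero]
    have hQWe : ∀ w : W, Q e w = 0 := fun w => (horth w (hWe w) (hWf w)).1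
    have hQWf : ∀ w : W, Q f w = 0 := fun w => (horth w (hWe w) (hWf w)).2
    have hQWe' : ∀ w : W, Q w e = 0 := fun w => by rw [hs, hQWe]
    have hQWf' : ∀ w : W, Q w f = 0 := fun w => by rw [hs, hQWf]
    simp only [LinearMap.domRestrict₁₂_apply] at hee' hff' hef' hQe' hQf' hQef'
    refine ⟨Fin.cons e fun i => e' i, Fin.cons f fun i => f' i, Fin.cons d d', ?_, ?_, ?_, ?_,
      ?_, ?_, ?_⟩
    · intro i
      cases i using Fin.cases <;> simp [hd, hd']
    all_goals
      intro i j
      cases i using Fin.cases <;> cases j using Fin.cases <;>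
        simp [halt, hWe, hWf, hWe', hWf', hQWe, hQWf, hQWe', hQWf', hee, hff, hef, hQef, hee',
          hff', hef', hQe', hQf', hQef', Fin.succ_ne_zero, (Fin.succ_ne_zero _).symm]

/-- A nonnegative monotone sequence of length `n` with exactly `n - m` nonzero terms vanishes
precisely in its first `m` places. -/
lemma zero_pattern_of_monotone {n m : ℕ} (hm : m < n) (d : Fin n → ℝ) (hd : ∀ i, 0 ≤ d i)
    (hmono : Monotone d) (hcard : Fintype.card {i // d i ≠ 0} = n - m) :
    (∀ i : Fin n, (i : ℕ) < m → d i = 0) ∧ (∀ i : Fin n, m ≤ (i : ℕ) → 0 < d i) := by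
  rw [Fintype.card_subtype] at hcard
  constructor
  · intro i hi
    by_contra h
    have hsub : Finset.Ici i ⊆ Finset.univ.filter fun i => d i ≠ 0 := fun j hj => by
      have h1 := hmono (Finset.mem_Ici.1 hj)
      have h2 := lt_of_le_of_ne (hd i) (Ne.symm h)
      simpa using (h2.trans_le h1).ne'
    have := Finset.card_le_card hsub
    rw [Fin.card_Ici, hcard] at this
    omega
  · intro i hi
    refine lt_of_le_of_ne (hd i) fun h => ?_
    have hsub : (Finset.univ.filter fun i => d i ≠ 0) ⊆ Finset.Ioi i := fun j hj => by
      rw [Finset.mem_Ioi]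
      by_contra hji
      have h1 := hmono (not_lt.1 hji)
      exact (Finset.mem_filter.1 hj).2 (le_antisymm (h1.trans h.symm.le) (hd j))
    have := Finset.card_le_card hsub
    rw [Fin.card_Ioi, hcard] at this
    omega

lemma symplJ_mul_self (n : ℕ) : symplJ n * symplJ n = -1 := by
  simp [symplJ, fromBlocks_multiply, ← fromBlocks_one, fromBlocks_neg]

lemma symplJ_transpose (n : ℕ) : (symplJ n)ᵀ = -symplJ n := by
  simp [symplJ, fromBlocks_transpose, fromBlocks_neg]

/-- Williamson's diagonal form for a symmetric positive-semidefinite matrix `A`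
whose kernel is a symplectic subspace of dimension `2m`, `0 ≤ m < n`: there is a
symplectic `S` with `Sᵀ A S = diag(D, D)`, `D = diag(d_1, …, d_n)`,
`0 = d_1 = ⋯ = d_m < d_{m+1} ≤ ⋯ ≤ d_n`. -/
theorem williamson_form_of_psd_symplectic_kernel
    {n m : ℕ} (hm : m < n)
    (A : Matrix (Fin n ⊕ Fin n) (Fin n ⊕ Fin n) ℝ) (hA : A.PosSemidef)
    (hker : IsSymplecticSubspace (LinearMap.ker A.mulVecLin))
    (hdim : Module.finrank ℝ (LinearMap.ker A.mulVecLin) = 2 * m) :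
    ∃ (S : Matrix (Fin n ⊕ Fin n) (Fin n ⊕ Fin n) ℝ) (d : Fin n → ℝ),
      Sᵀ * symplJ n * S = symplJ n ∧
      (∀ i : Fin n, (i : ℕ) < m → d i = 0) ∧
      (∀ i : Fin n, m ≤ (i : ℕ) → 0 < d i) ∧
      Monotone d ∧
      Sᵀ * A * S = Matrix.fromBlocks (Matrix.diagonal d) 0 0 (Matrix.diagonal d) := by
  have hform : ∀ (M : Matrix (Fin n ⊕ Fin n) (Fin n ⊕ Fin n) ℝ) (x y),
      Matrix.toLinearMap₂' ℝ M x y = x ⬝ᵥ M *ᵥ y := fun M x y =>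
    Matrix.toLinearMap₂'_apply' M x y
  have hflip : ∀ (M : Matrix (Fin n ⊕ Fin n) (Fin n ⊕ Fin n) ℝ) (x y : Fin n ⊕ Fin n → ℝ),
      x ⬝ᵥ M *ᵥ y = y ⬝ᵥ Mᵀ *ᵥ x := fun M x y => by
    rw [dotProduct_mulVec, dotProduct_comm, mulVec_transpose]
  have hAT : Aᵀ = A := by simpa using hA.isHermitian.eq
  have hJskew : ∀ x y : Fin n ⊕ Fin n → ℝ, x ⬝ᵥ symplJ n *ᵥ y = -(y ⬝ᵥ symplJ n *ᵥ x) :=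
    fun x y => by rw [hflip, symplJ_transpose, neg_mulVec, dotProduct_neg]
  have hnull : ∀ x, (∀ w, x ⬝ᵥ A *ᵥ w = 0) ↔ x ∈ LinearMap.ker A.mulVecLin := by
    intro x
    simp only [LinearMap.mem_ker, mulVecLin_apply]
    constructor
    · intro h
      exact dotProduct_eq_zero _ fun w => by
        rw [dotProduct_comm, hflip, hAT]; exact h w
    · intro h w
      rw [hflip, hAT, h, dotProduct_zero]
  obtain ⟨e, f, d, hd, hee, hff, hef, hQe, hQf, hQef⟩ :=
    exists_williamson_basis n (Matrix.toLinearMap₂' ℝ (symplJ n)) (Matrix.toLinearMap₂' ℝ A)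
      (by simp [two_mul])
      (fun x => by
        rw [hform]
        have := hJskew x x
        linarith)
      (fun x hx => by
        have h : x ᵥ* symplJ n = 0 := dotProduct_eq_zero _ fun w => by
          rw [← dotProduct_mulVec, ← hform]; exact hx w
        have h2 : x ᵥ* (symplJ n * symplJ n) = 0 := by
          rw [← vecMul_vecMul, h, zero_vecMul]
        rw [symplJ_mul_self, vecMul_neg, vecMul_one] at h2
        exact neg_eq_zero.1 h2)
      (fun x y => by rw [hform, hform, hflip, hAT])
      (fun x => by
        rw [hform]
        simpa using hA.dotProduct_mulVec_nonneg x)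
      (fun x hx hx0 => by
        simp only [hform] at hx ⊢
        obtain ⟨y, hy, hxy⟩ := hker x ((hnull x).1 hx) hx0
        exact ⟨y, (hnull y).2 hy, hxy⟩)
  simp only [hform] at hee hff hef hQe hQf hQef
  let σ := Tuple.sort d
  have hmono : Monotone (d ∘ σ) := Tuple.monotone_sort d
  let b : Fin n ⊕ Fin n → (Fin n ⊕ Fin n → ℝ) := Sum.elim (e ∘ σ) (f ∘ σ)
  let S : Matrix (Fin n ⊕ Fin n) (Fin n ⊕ Fin n) ℝ := (Matrix.of b)ᵀ
  have hS : ∀ M i j, (Sᵀ * M * S) i j = b i ⬝ᵥ M *ᵥ b j := fun M i j => by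
    rw [Matrix.mul_assoc]
    rfl
  have hSJ : Sᵀ * symplJ n * S = symplJ n := by
    ext i j
    rw [hS]
    rcases i with i | i <;> rcases j with j | j
    · simp only [b, Sum.elim_inl, Function.comp_apply, hee]
      simp [symplJ]
    · simp only [b, Sum.elim_inl, Sum.elim_inr, Function.comp_apply, hef]
      simp [symplJ, Matrix.one_apply]
    · rw [hJskew]
      simp only [b, Sum.elim_inl, Sum.elim_inr, Function.comp_apply, hef]
      simp [symplJ, Matrix.one_apply, eq_comm]
    · simp only [b, Sum.elim_inr, Function.comp_apply, hff]
      simp [symplJ]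
  have hSA : Sᵀ * A * S =
      Matrix.fromBlocks (Matrix.diagonal (d ∘ σ)) 0 0 (Matrix.diagonal (d ∘ σ)) := by
    ext i j
    rw [hS]
    rcases i with i | i <;> rcases j with j | j
    · simp [b, hQe, Matrix.diagonal_apply]
    · simp [b, hQef]
    · rw [hflip, hAT]
      simp [b, hQef]
    · simp [b, hQf, Matrix.diagonal_apply]
  have hSu : IsUnit S.det := by
    have h : (-(symplJ n) * Sᵀ * symplJ n) * S = 1 := by
      rw [Matrix.mul_assoc, Matrix.mul_assoc, ← Matrix.mul_assoc Sᵀ, hSJ, Matrix.neg_mul,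
        symplJ_mul_self, neg_neg]
    exact Matrix.isUnit_det_of_left_inverse h
  have hrank : A.rank = 2 * n - 2 * m := by
    have h := LinearMap.finrank_range_add_finrank_ker A.mulVecLin
    rw [hdim] at h
    simp only [Module.finrank_fintype_fun_eq_card, Fintype.card_sum, Fintype.card_fin] at h
    change A.rank + _ = _ at h
    omega
  have hcard : Fintype.card {i // (d ∘ σ) i ≠ 0} = n - m := by
    have h1 : (Sᵀ * A * S).rank = A.rank := by
      rw [Matrix.rank_mul_eq_left_of_isUnit_det _ _ hSu,
        Matrix.rank_mul_eq_right_of_isUnit_det _ _ (by rwa [det_transpose])]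
    rw [hSA, fromBlocks_diagonal, rank_diagonal, hrank, ← Nat.card_eq_fintype_card,
      Nat.card_congr Equiv.subtypeSum, Nat.card_sum] at h1
    simp only [Sum.elim_inl, Sum.elim_inr] at h1
    rw [← Nat.card_eq_fintype_card]
    omega
  obtain ⟨h0, h1⟩ := zero_pattern_of_monotone hm (d ∘ σ) (fun i => hd _) hmono hcard
  exact ⟨S, d ∘ σ, hSJ, h0, h1, hmono, hSA⟩
end

section
/- Let A be a 2n×2n real symmetric positive-semidefinite matrix whose kernel is a symplectic subspace of ℝ^{2n}, and let A^{1/2} denote the unique symmetric positive-semidefinite square root of A. Then ker(A^{1/2} J_{2n} A^{1/2}) = ker(A^{1/2}). -/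
/-!
Write `B = A^{1/2}`. Since `|B y|² = yᵀ A y`, the kernels of `A` and `B` coincide. If
`B J B x = 0`, then `z = J B x` lies in this kernel, and for every `y` in it
`zᵀ J y = xᵀ B Jᵀ J y = xᵀ B y = 0`, because `Jᵀ J = 1`. The form being nondegenerate on the
kernel, `z = 0`, and hence `B x = Jᵀ z = 0`. The other inclusion is immediate.
-/

open Matrix

theorem symplJ_transpose_mul_self (n : ℕ) : (symplJ n)ᵀ * symplJ n = 1 := by
  simp [symplJ, Matrix.fromBlocks_transpose, Matrix.fromBlocks_multiply]

/-- If `A` is symmetric positive-semidefinite with symplectic kernel and `B = A^{1/2}`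
is its (unique) symmetric positive-semidefinite square root, then
`ker(A^{1/2} J_{2n} A^{1/2}) = ker(A^{1/2})`. -/
theorem ker_sqrt_J_sqrt_eq_ker_sqrt
    {n : ℕ}
    (A B : Matrix (Fin n ⊕ Fin n) (Fin n ⊕ Fin n) ℝ)
    (hA : A.PosSemidef)
    (hker : IsSymplecticSubspace (LinearMap.ker A.mulVecLin))
    (hB : B.PosSemidef) (hBB : B * B = A) :
    LinearMap.ker (B * symplJ n * B).mulVecLin = LinearMap.ker B.mulVecLin := by
  have hBT : Bᵀ = B := by simpa using hB.isHermitian.eq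
  have hkerB : ∀ y, A *ᵥ y = 0 → B *ᵥ y = 0 := by
    intro y hy
    rw [← dotProduct_self_eq_zero, dotProduct_mulVec, ← mulVec_transpose, hBT,
      mulVec_mulVec, hBB, hy, zero_dotProduct]
  ext x
  simp only [LinearMap.mem_ker, mulVecLin_apply]
  constructor
  · intro hx
    -- Nondegeneracy of the form on the kernel forces `J B x = 0`.
    have hz : symplJ n *ᵥ (B *ᵥ x) = 0 := by
      by_contra hne
      obtain ⟨y, hy, h1⟩ := hker (symplJ n *ᵥ (B *ᵥ x)) (by
        rw [LinearMap.mem_ker, mulVecLin_apply, ← hBB, mulVec_mulVec, mulVec_mulVec,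
          Matrix.mul_assoc, Matrix.mul_assoc, ← Matrix.mul_assoc B (symplJ n) B,
          ← mulVec_mulVec, hx, mulVec_zero]) hne
      rw [LinearMap.mem_ker, mulVecLin_apply] at hy
      rw [dotProduct_mulVec, ← mulVec_transpose, mulVec_mulVec,
        symplJ_transpose_mul_self, one_mulVec, dotProduct_comm, dotProduct_mulVec,
        ← mulVec_transpose, hBT, hkerB y hy, zero_dotProduct] at h1
      exact zero_ne_one h1
    rw [← one_mulVec (B *ᵥ x), ← symplJ_transpose_mul_self, ← mulVec_mulVec, hz, mulVec_zero]
  · intro hx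
    rw [← mulVec_mulVec, hx, mulVec_zero]
end

section
/- Let A be a 2n×2n real symmetric positive-definite matrix, S ∈ ℝ^{2n×2n} a symplectic matrix with Sᵀ A S = [[D, 0], [0, D]] for D = diag(d_1, …, d_n) with all d_j > 0. For 0 ≤ m < n, set D̃ = diag(0, …, 0, d_{m+1}, …, d_n) (the first m diagonal entries replaced by zero) and define Ã = J_{2n} S [[D̃, 0], [0, D̃]] (J_{2n} S)ᵀ. Then Ã is symmetric positive-semidefinite, Sᵀ Ã S = [[D̃, 0], [0, D̃]], and the rank of Ã equals 2n − 2m. -/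
/-!
Write `E = diag(D̃, D̃)` and `J = symplJ n`. Positive semidefiniteness holds because `Ã` is a
congruence of the nonnegative diagonal matrix `E`. Since `Sᵀ J S = J`, one gets
`Sᵀ Ã S = (Sᵀ J S) E (Sᵀ J S)ᵀ = J E Jᵀ = E`, the last step because `J` only swaps the two
equal diagonal blocks. Finally `J S` is invertible (`J` and `S` are), so `Ã` and `E` have equal
rank, which is the number of nonzero entries of `(D̃, D̃)`, namely `2 (n - m)`.
-/

open Matrix

theorem symplJ_mul_transpose (n : ℕ) : symplJ n * (symplJ n)ᵀ = 1 := by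
  simp [symplJ, fromBlocks_transpose, fromBlocks_multiply]

theorem isUnit_det_symplJ (n : ℕ) : IsUnit (symplJ n).det :=
  isUnit_det_of_right_inverse (symplJ_mul_transpose n)

theorem isUnit_det_of_symplectic {n : ℕ} {S : Matrix (Fin n ⊕ Fin n) (Fin n ⊕ Fin n) ℝ}
    (hS : Sᵀ * symplJ n * S = symplJ n) : IsUnit S.det := by
  have h : IsUnit (Sᵀ * symplJ n * S).det := by
    rw [hS]
    exact isUnit_det_symplJ n
  rw [det_mul] at h
  exact isUnit_of_mul_isUnit_right h

theorem symplJ_conj_diagonal {n : ℕ} (w : Fin n → ℝ) :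
    symplJ n * fromBlocks (diagonal w) 0 0 (diagonal w) * (symplJ n)ᵀ =
      fromBlocks (diagonal w) 0 0 (diagonal w) := by
  simp [symplJ, fromBlocks_transpose, fromBlocks_multiply, -fromBlocks_diagonal]

theorem rank_fromBlocks_diagonal_self {n : ℕ} (w : Fin n → ℝ) :
    (fromBlocks (diagonal w) 0 0 (diagonal w)).rank =
      2 * (Finset.univ.filter fun i => w i ≠ 0).card := by
  classical
  rw [fromBlocks_diagonal, rank_diagonal, Fintype.card_subtype,
    Finset.card_filter, Fintype.sum_sum_type, two_mul, Finset.card_filter]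
  simp only [Sum.elim_inl, Sum.elim_inr]
  -- the two sides differ only in their decidability instances
  congr!

/-- Given an spd matrix `A` with Williamson diagonalization `Sᵀ A S = diag(D, D)` and
`0 ≤ m < n`, zeroing out the first `m` symplectic eigenvalues yields
`Ã = J S diag(D̃, D̃) (J S)ᵀ`, which is symmetric positive-semidefinite, satisfies
`Sᵀ Ã S = diag(D̃, D̃)`, and has rank `2n − 2m`. -/
theorem modified_matrix_psd_diag_rank
    {n m : ℕ} (hm : m < n)
    (A S : Matrix (Fin n ⊕ Fin n) (Fin n ⊕ Fin n) ℝ)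
    (hA : A.PosDef)
    (hS : Sᵀ * symplJ n * S = symplJ n)
    (d : Fin n → ℝ) (hd : ∀ i, 0 < d i)
    (hdiag : Sᵀ * A * S = Matrix.fromBlocks (Matrix.diagonal d) 0 0 (Matrix.diagonal d))
    (dt : Fin n → ℝ) (hdt : ∀ i : Fin n, dt i = if (i : ℕ) < m then 0 else d i)
    (At : Matrix (Fin n ⊕ Fin n) (Fin n ⊕ Fin n) ℝ)
    (hAt : At = (symplJ n * S) *
        Matrix.fromBlocks (Matrix.diagonal dt) 0 0 (Matrix.diagonal dt) * (symplJ n * S)ᵀ) :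
    At.PosSemidef ∧
    Sᵀ * At * S = Matrix.fromBlocks (Matrix.diagonal dt) 0 0 (Matrix.diagonal dt) ∧
    At.rank = 2 * n - 2 * m := by
  set E := fromBlocks (diagonal dt) 0 0 (diagonal dt) with hE
  have hdt0 : ∀ i, 0 ≤ dt i := fun i => by
    rw [hdt]; split_ifs
    · exact le_rfl
    · exact (hd i).le
  have hEpsd : E.PosSemidef := by
    rw [hE, fromBlocks_diagonal, posSemidef_diagonal_iff]
    rintro (i | i) <;> exact hdt0 i
  have hdet : IsUnit (symplJ n * S).det := by
    rw [det_mul]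
    exact (isUnit_det_symplJ n).mul (isUnit_det_of_symplectic hS)
  refine ⟨?_, ?_, ?_⟩
  · rw [hAt, ← conjTranspose_eq_transpose_of_trivial]
    exact hEpsd.mul_mul_conjTranspose_same _
  · calc Sᵀ * At * S = (Sᵀ * symplJ n * S) * E * (Sᵀ * symplJ n * S)ᵀ := by
          simp only [hAt, transpose_mul, transpose_transpose, Matrix.mul_assoc]
      _ = E := by rw [hS, symplJ_conj_diagonal]
  · have hcard : (Finset.univ.filter fun i => dt i ≠ 0).card = n - m := by
      have h : (Finset.univ.filter fun i => dt i ≠ 0) = Finset.Ici (⟨m, hm⟩ : Fin n) := by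
        ext i
        simp [hdt, (hd i).ne', Fin.le_def]
      rw [h, Fin.card_Ici]
    rw [hAt, rank_mul_eq_left_of_isUnit_det _ _ (by rwa [det_transpose]),
      rank_mul_eq_right_of_isUnit_det _ _ hdet, rank_fromBlocks_diagonal_self, hcard]
    omega
end

section
/- Let A be a 2n×2n real symmetric positive-semidefinite matrix, let S, T ∈ ℝ^{2n×2n} be symplectic matrices, and let D = diag(d_1, …, d_n) and D' = diag(d'_1, …, d'_n) be diagonal matrices with nonnegative entries arranged in nondecreasing order such that Sᵀ A S = [[D, 0], [0, D]] and Tᵀ A T = [[D', 0], [0, D']]. Then D = D', i.e., d_j = d'_j for all j = 1, …, n (the symplectic spectrum of A is unique). -/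
/-!
For a symplectic `S` with `Sᵀ A S = D ⊕ D`, the pencil `A + x J` is carried by the congruence
`S` to `[[D, x], [-x, D]]`. Since `(det S)² = 1`, this preserves the determinant, and the product
of the latter matrix with its transpose is `(D² + x²) ⊕ (D² + x²)`; hence
`det (A + x J)² = (∏ᵢ (dᵢ² + x²))²`. The left side depends on `A` alone. So the polynomials
`∏ᵢ (t + dᵢ²)` and `∏ᵢ (t + d'ᵢ²)` agree at every `t = x² ≥ 0`, hence are equal, and their root
multisets `{-dᵢ²}` and `{-d'ᵢ²}` coincide. As the `dᵢ` are nonnegative, the multisets `{dᵢ}` and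
`{d'ᵢ}` coincide, and a nondecreasing enumeration of a multiset is unique.
-/

open Matrix

lemma det_sq_of_symplectic {n : ℕ} {S : Matrix (Fin n ⊕ Fin n) (Fin n ⊕ Fin n) ℝ}
    (hS : Sᵀ * symplJ n * S = symplJ n) : S.det ^ 2 = 1 := by
  have hJJ : symplJ n * symplJ n = -1 := by
    simp [symplJ, fromBlocks_multiply, ← fromBlocks_one, fromBlocks_neg]
  have hJ : (symplJ n).det ≠ 0 := by
    intro h
    have h1 := congrArg det hJJ
    rw [det_mul, h, det_neg, det_one] at h1
    simp at h1
  have h := congrArg det hS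
  rw [det_mul, det_mul, det_transpose] at h
  apply mul_right_cancel₀ hJ
  linarith

lemma det_pencil_sq {n : ℕ} {A S : Matrix (Fin n ⊕ Fin n) (Fin n ⊕ Fin n) ℝ}
    (hS : Sᵀ * symplJ n * S = symplJ n) {d : Fin n → ℝ}
    (hdiag : Sᵀ * A * S = fromBlocks (diagonal d) 0 0 (diagonal d)) (x : ℝ) :
    (A + x • symplJ n).det ^ 2 = (∏ i, (x ^ 2 + d i ^ 2)) ^ 2 := by
  set M : Matrix (Fin n ⊕ Fin n) (Fin n ⊕ Fin n) ℝ :=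
    fromBlocks (diagonal d) (diagonal fun _ => x) (diagonal fun _ => -x) (diagonal d) with hM
  have hcongr : Sᵀ * (A + x • symplJ n) * S = M := by
    rw [Matrix.mul_add, Matrix.add_mul, hdiag, Matrix.mul_smul, Matrix.smul_mul, hS, symplJ,
      fromBlocks_smul, fromBlocks_add, hM]
    congr 1 <;> ext i j <;> by_cases hij : i = j <;> simp [hij]
  have hdet : M.det = (A + x • symplJ n).det := by
    rw [← hcongr, det_mul, det_mul, det_transpose]
    linear_combination (A + x • symplJ n).det * det_sq_of_symplectic hS
  have hMM : M * Mᵀ = fromBlocks (diagonal fun i => x ^ 2 + d i ^ 2) 0 0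
      (diagonal fun i => x ^ 2 + d i ^ 2) := by
    rw [hM, fromBlocks_transpose, fromBlocks_multiply]
    simp only [diagonal_transpose, diagonal_mul_diagonal, diagonal_add]
    congr 1
    · congr 1; ext i; ring
    · rw [← diagonal_zero]; congr 1; ext i; ring
    · rw [← diagonal_zero]; congr 1; ext i; ring
    · congr 1; ext i; ring
  have h := congrArg det hMM
  rw [det_mul, det_transpose, det_fromBlocks_zero₂₁, det_diagonal, hdet] at h
  rw [sq, sq, h]

/-- A nonnegative nondecreasing family is determined by the function `x ↦ ∏ᵢ (x² + dᵢ²)`. -/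
lemma eq_of_forall_prod_eq {n : ℕ} {d d' : Fin n → ℝ}
    (hd0 : ∀ i, 0 ≤ d i) (hd'0 : ∀ i, 0 ≤ d' i) (hd : Monotone d) (hd' : Monotone d')
    (h : ∀ x : ℝ, ∏ i, (x ^ 2 + d i ^ 2) = ∏ i, (x ^ 2 + d' i ^ 2)) : d = d' := by
  classical
  let s (e : Fin n → ℝ) : Multiset ℝ := Finset.univ.val.map e
  let p (e : Fin n → ℝ) : Polynomial ℝ :=
    (((s e).map fun a => -a ^ 2).map fun a => Polynomial.X - Polynomial.C a).prod
  have hp_eval (e : Fin n → ℝ) (x : ℝ) : (p e).eval (x ^ 2) = ∏ i, (x ^ 2 + e i ^ 2) := by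
    have hpe : p e = ∏ i, (Polynomial.X - Polynomial.C (-e i ^ 2)) := by
      simp only [p, s, Multiset.map_map]
      rfl
    simp [hpe, Polynomial.eval_prod]
  have hp : p d = p d' := by
    refine Polynomial.eq_of_infinite_eval_eq _ _ ((Set.Ici_infinite (0 : ℝ)).mono fun t ht => ?_)
    have ht' : √t ^ 2 = t := Real.sq_sqrt ht
    have hx := h (√t)
    rwa [← hp_eval, ← hp_eval, ht'] at hx
  have hroots := congrArg Polynomial.roots hp
  simp only [p, Polynomial.roots_multiset_prod_X_sub_C] at hroots
  -- `a ↦ √(-a)` recovers `dᵢ` from the root `-dᵢ²`, by nonnegativity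
  have hsqrt {e : Fin n → ℝ} (he : ∀ i, 0 ≤ e i) :
      ((s e).map fun a => -a ^ 2).map (fun a => √(-a)) = s e := by
    simp [s, Function.comp_def, Real.sqrt_sq (he _)]
  have hs : s d = s d' := by
    rw [← hsqrt hd0, hroots, hsqrt hd'0]
  simp only [s, Fin.univ_val_map, Multiset.coe_eq_coe] at hs
  exact List.ofFn_injective (hs.eq_of_sortedLE hd.sortedLE_ofFn hd'.sortedLE_ofFn)

/-- Uniqueness of the symplectic spectrum: two Williamson diagonal forms of the same
symmetric positive-semidefinite matrix `A`, with nonnegative nondecreasing diagonal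
entries, have the same diagonal. -/
theorem symplectic_spectrum_unique
    {n : ℕ}
    (A : Matrix (Fin n ⊕ Fin n) (Fin n ⊕ Fin n) ℝ) (hA : A.PosSemidef)
    (S T : Matrix (Fin n ⊕ Fin n) (Fin n ⊕ Fin n) ℝ)
    (hS : Sᵀ * symplJ n * S = symplJ n)
    (hT : Tᵀ * symplJ n * T = symplJ n)
    (d d' : Fin n → ℝ)
    (hd0 : ∀ i, 0 ≤ d i) (hd'0 : ∀ i, 0 ≤ d' i)
    (hdmono : Monotone d) (hd'mono : Monotone d')
    (hdiagS : Sᵀ * A * S = Matrix.fromBlocks (Matrix.diagonal d) 0 0 (Matrix.diagonal d))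
    (hdiagT : Tᵀ * A * T = Matrix.fromBlocks (Matrix.diagonal d') 0 0 (Matrix.diagonal d')) :
    d = d' := by
  refine eq_of_forall_prod_eq hd0 hd'0 hdmono hd'mono fun x => ?_
  have hsq := (det_pencil_sq hS hdiagS x).symm.trans (det_pencil_sq hT hdiagT x)
  exact (pow_left_inj₀ (Finset.prod_nonneg fun i _ => by positivity)
    (Finset.prod_nonneg fun i _ => by positivity) two_ne_zero).1 hsq
end

section
/- Let A be a 2n×2n real symmetric positive-semidefinite matrix and let [u, v] be a symplectic eigenvector pair of A corresponding to the symplectic eigenvalue d (so u, v are nonzero, A u = d J_{2n} v, A v = −d J_{2n} u). Set 𝒜 = [[A, 0], [0, A]] and 𝒥 = [[0, J_{2n}], [−J_{2n}, 0]] in ℝ^{4n×4n}. Then (u; v) and (v; −u) are two linearly independent vectors x satisfying 𝒜 x = d 𝒥 x, and (v; u) and (−u; v) are two linearly independent vectors x satisfying 𝒜 x = −d 𝒥 x; in particular d and −d are eigenvalues of the matrix pencil 𝒜 − λ𝒥 of multiplicity at least two. -/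
/-!
The four pencil equations are the two equations of a symplectic eigenvector pair read off
block by block, since `𝒜 (x; y) = (A x; A y)` and `𝒥 (x; y) = (J y; -J x)`.
A vanishing combination with coefficients `a, b` of either pair of vectors amounts to
`a u + b v = 0` and `a v - b u = 0`; hence `(a² + b²) u = 0`, and `u ≠ 0` forces
`a = b = 0` (`coeffs_eq_zero`).
-/

open Matrix

/-- `𝒜 = diag(A, A) ∈ ℝ^{4n×4n}`. -/
noncomputable def bigA {n : ℕ} (A : Matrix (Fin n ⊕ Fin n) (Fin n ⊕ Fin n) ℝ) :
    Matrix ((Fin n ⊕ Fin n) ⊕ (Fin n ⊕ Fin n)) ((Fin n ⊕ Fin n) ⊕ (Fin n ⊕ Fin n)) ℝ :=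
  Matrix.fromBlocks A 0 0 A

/-- `𝒥 = [[0, J_{2n}], [−J_{2n}, 0]] ∈ ℝ^{4n×4n}`. -/
noncomputable def bigJ (n : ℕ) :
    Matrix ((Fin n ⊕ Fin n) ⊕ (Fin n ⊕ Fin n)) ((Fin n ⊕ Fin n) ⊕ (Fin n ⊕ Fin n)) ℝ :=
  Matrix.fromBlocks 0 (symplJ n) (-(symplJ n)) 0

/-- Eliminating `v` from the two relations gives `(a² + b²) u = 0`. -/
lemma coeffs_eq_zero {ι : Type*} {u v : ι → ℝ} (hu : u ≠ 0) {a b : ℝ}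
    (h : ∀ i, a * u i + b * v i = 0) (h' : ∀ i, a * v i - b * u i = 0) :
    a = 0 ∧ b = 0 := by
  obtain ⟨i, hi⟩ := Function.ne_iff.mp hu
  have hi : u i ≠ 0 := hi
  have key : (a ^ 2 + b ^ 2) * u i = 0 := by
    linear_combination a * h i - b * h' i
  have hs : a ^ 2 + b ^ 2 = 0 := (mul_eq_zero.mp key).resolve_right hi
  constructor <;> nlinarith [sq_nonneg a, sq_nonneg b]

/-- If `[u, v]` is a symplectic eigenvector pair of the spsd matrix `A` for the
symplectic eigenvalue `d`, then `(u; v)` and `(v; −u)` are linearly independent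
solutions of `𝒜 x = d 𝒥 x`, and `(v; u)` and `(−u; v)` are linearly independent
solutions of `𝒜 x = −d 𝒥 x`; in particular `d` and `−d` are eigenvalues of the pencil
`𝒜 − λ𝒥` of multiplicity at least two. -/
theorem symplectic_eigenpair_gives_pencil_eigenvectors
    {n : ℕ}
    (A : Matrix (Fin n ⊕ Fin n) (Fin n ⊕ Fin n) ℝ) (hA : A.PosSemidef)
    (u v : Fin n ⊕ Fin n → ℝ) (d : ℝ)
    (hu : u ≠ 0) (hv : v ≠ 0)
    (h1 : A.mulVec u = d • (symplJ n).mulVec v)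
    (h2 : A.mulVec v = -(d • (symplJ n).mulVec u)) :
    LinearIndependent ℝ ![Sum.elim u v, Sum.elim v (-u)] ∧
    (bigA A).mulVec (Sum.elim u v) = d • (bigJ n).mulVec (Sum.elim u v) ∧
    (bigA A).mulVec (Sum.elim v (-u)) = d • (bigJ n).mulVec (Sum.elim v (-u)) ∧
    LinearIndependent ℝ ![Sum.elim v u, Sum.elim (-u) v] ∧
    (bigA A).mulVec (Sum.elim v u) = (-d) • (bigJ n).mulVec (Sum.elim v u) ∧
    (bigA A).mulVec (Sum.elim (-u) v) = (-d) • (bigJ n).mulVec (Sum.elim (-u) v) := by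
  refine ⟨?_, ?_, ?_, ?_, ?_, ?_⟩
  · rw [LinearIndependent.pair_iff]
    intro a b hab
    refine coeffs_eq_zero (v := v) hu (fun i => ?_) (fun i => ?_)
    · simpa using congrFun hab (Sum.inl i)
    · simpa [sub_eq_add_neg] using congrFun hab (Sum.inr i)
  · ext (i | i) <;> simp [bigA, bigJ, fromBlocks_mulVec, h1, h2, neg_mulVec]
  · ext (i | i) <;> simp [bigA, bigJ, fromBlocks_mulVec, h1, h2, neg_mulVec, mulVec_neg]
  · rw [LinearIndependent.pair_iff]
    intro a b hab
    refine coeffs_eq_zero (v := v) hu (fun i => ?_) (fun i => ?_)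
    · simpa using congrFun hab (Sum.inr i)
    · simpa [sub_eq_add_neg] using congrFun hab (Sum.inl i)
  · ext (i | i) <;> simp [bigA, bigJ, fromBlocks_mulVec, h1, h2, neg_mulVec]
  · ext (i | i) <;> simp [bigA, bigJ, fromBlocks_mulVec, h1, h2, neg_mulVec, mulVec_neg]
end
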